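/- Existence of a greatest Markov equivalent directed graph: for every directed graph G = (V, E_d), the E-separation Markov equivalence class [G]_E of G contains a greatest element with respect to the partial order ⊆ on edge sets; that is, there exists a directed graph Ĝ over V with I_E^{Ĝ} = I_E^G such that every directed graph G′ over V with I_E^{G′} = I_E^G satisfies G′ ⊆ Ĝ. -/

import Mathlib

namespace ESepPaper

/-- A directed mixed graph: directed edges and bidirected edges over a node type `V`.
A directed graph (DG) is a DMG with `Ebi = ∅`. -/
structure DMG (V : Type) where
  Ed : Set (V × V)
  Ebi : Set (Sym2 V)

variable {V : Type}

/-- `G.ancestor u v` : there is a directed path `u → … → v` (possibly trivial). -/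
def DMG.ancestor (G : DMG V) : V → V → Prop :=
  Relation.ReflTransGen (fun u v => (u, v) ∈ G.Ed)

/-- Ancestors of a set `C`. -/
def DMG.anc (G : DMG V) (C : Set V) : Set V := {u | ∃ v ∈ C, G.ancestor u v}

/-- Strongly connected component of `v`. -/
def DMG.scc (G : DMG V) (v : V) : Set V := {w | G.ancestor w v ∧ G.ancestor v w}

/-- Parents of a set of nodes. -/
def DMG.pa (G : DMG V) (S : Set V) : Set V := {w | ∃ v ∈ S, (w, v) ∈ G.Ed}

/-- Kind of a traversed edge on a walk: forward directed, backward directed, or bidirected. -/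
inductive LinkType | fwd | bwd | bi
deriving DecidableEq

/-- Validity of a link of kind `t` between consecutive walk nodes `u` and `v`. -/
def DMG.linkOK (G : DMG V) (u v : V) : LinkType → Prop
  | .fwd => (u, v) ∈ G.Ed
  | .bwd => (v, u) ∈ G.Ed
  | .bi => s(u, v) ∈ G.Ebi

/-- Arrowhead at the second (right) endpoint of the link. -/
def LinkType.headR : LinkType → Prop
  | .fwd => True
  | .bwd => False
  | .bi => True

/-- Arrowhead at the first (left) endpoint of the link. -/
def LinkType.headL : LinkType → Prop
  | .fwd => False
  | .bwd => True
  | .bi => True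

/-- Tail at the second (right) endpoint. -/
def LinkType.tailR (t : LinkType) : Prop := t = .bwd

/-- Tail at the first (left) endpoint. -/
def LinkType.tailL (t : LinkType) : Prop := t = .fwd

/-- Walks in a DMG. -/
inductive DMG.Walk (G : DMG V) : V → V → Type
  | nil (v : V) : DMG.Walk G v v
  | cons {u v w : V} (t : LinkType) (h : G.linkOK u v t) (p : DMG.Walk G v w) : DMG.Walk G u w

/-- An interior node on a walk, whose incoming link is `t1` and outgoing link is `t2`,
is a collider iff both links have an arrowhead at it. -/
def colliderAt (t1 t2 : LinkType) : Prop := t1.headR ∧ t2.headL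

/-- An interior non-collider `v` between neighbours `u` (incoming link `t1`) and `w`
(outgoing link `t2`) is unblockable: on every side where the link has a tail at `v`, the
corresponding neighbour lies in `scc_G(v)` (left-chain/right-chain/fork cases). -/
def unblockableAt (G : DMG V) (u v w : V) (t1 t2 : LinkType) : Prop :=
  (t1.tailR → u ∈ G.scc v) ∧ (t2.tailL → w ∈ G.scc v)

namespace DMG.Walk

variable {G : DMG V}

/-- First node of a walk. -/
def first {a b : V} (_ : G.Walk a b) : V := a

def length : {a b : V} → G.Walk a b → ℕ
  | _, _, .nil _ => 0
  | _, _, .cons _ _ p => p.length + 1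

def support : {a b : V} → G.Walk a b → List V
  | a, _, .nil _ => [a]
  | a, _, .cons _ _ p => a :: p.support

/-- Auxiliary: σ-openness of the remainder of a walk, where `u` is the previous node and
`t1` the link from `u` into the current first node. -/
def sigmaOpenAux (C : Set V) : (u : V) → LinkType → {b c : V} → G.Walk b c → Prop
  | _, _, _, _, .nil _ => True
  | u, t1, v, _, .cons t2 _ q =>
      ((colliderAt t1 t2 → v ∈ G.anc C) ∧
       (¬ colliderAt t1 t2 → ¬ unblockableAt G u v q.first t1 t2 → v ∉ C)) ∧
      sigmaOpenAux C v t2 q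

/-- The walk is σ-open given `C`: every collider on it is an ancestor of a node of `C`, and
no blockable non-collider on it lies in `C`. -/
def sigmaOpen (C : Set V) : {a b : V} → G.Walk a b → Prop
  | _, _, .nil _ => True
  | a, _, .cons t _ q => sigmaOpenAux C a t q

/-- All links are forward directed. -/
def IsDirected : {a b : V} → G.Walk a b → Prop
  | _, _, .nil _ => True
  | _, _, .cons t _ p => t = .fwd ∧ p.IsDirected

/-- Interior nodes of the walk (all nodes except the two endpoints). -/
def interior {a b : V} (p : G.Walk a b) : List V := p.support.tail.dropLast

/-- Arrowhead at the first endpoint. -/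
def headAtStart : {a b : V} → G.Walk a b → Prop
  | _, _, .nil _ => False
  | _, _, .cons t _ _ => t.headL

def headAtEndAux : LinkType → {a b : V} → G.Walk a b → Prop
  | t, _, _, .nil _ => t.headR
  | _, _, _, .cons t _ q => headAtEndAux t q

/-- Arrowhead at the last endpoint. -/
def headAtEnd : {a b : V} → G.Walk a b → Prop
  | _, _, .nil _ => False
  | _, _, .cons t _ q => headAtEndAux t q

def noCollidersAux : LinkType → {a b : V} → G.Walk a b → Prop
  | _, _, _, .nil _ => True
  | t1, _, _, .cons t2 _ q => ¬ colliderAt t1 t2 ∧ noCollidersAux t2 q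

/-- There is no collider on the walk. -/
def NoColliders : {a b : V} → G.Walk a b → Prop
  | _, _, .nil _ => True
  | _, _, .cons t _ q => noCollidersAux t q

def collidersInAux (S : Set V) : LinkType → {a b : V} → G.Walk a b → Prop
  | _, _, _, .nil _ => True
  | t1, v, _, .cons t2 _ q => (colliderAt t1 t2 → v ∈ S) ∧ collidersInAux S t2 q

/-- Every collider on the walk lies in `S`. -/
def CollidersIn (S : Set V) : {a b : V} → G.Walk a b → Prop
  | _, _, .nil _ => True
  | _, _, .cons t _ q => collidersInAux S t q

def noncollUnblAux : (u : V) → LinkType → {b c : V} → G.Walk b c → Prop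
  | _, _, _, _, .nil _ => True
  | u, t1, v, _, .cons t2 _ q =>
      (¬ colliderAt t1 t2 → unblockableAt G u v q.first t1 t2) ∧ noncollUnblAux v t2 q

/-- Every interior non-collider on the walk is unblockable. -/
def NoncollidersUnblockable : {a b : V} → G.Walk a b → Prop
  | _, _, .nil _ => True
  | a, _, .cons t _ q => noncollUnblAux a t q

/-- The set of edges occurring on a walk (directed edges as ordered pairs in `E_d`,
bidirected edges as unordered pairs). -/
def edges : {a b : V} → G.Walk a b → Set ((V × V) ⊕ Sym2 V)
  | _, _, .nil _ => ∅
  | a, _, .cons t _ p =>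
      insert (match t with
        | .fwd => Sum.inl (a, p.first)
        | .bwd => Sum.inl (p.first, a)
        | .bi => Sum.inr s(a, p.first)) p.edges

/-- Concatenation of walks. -/
def append : {a b c : V} → G.Walk a b → G.Walk b c → G.Walk a c
  | _, _, _, .nil _, q => q
  | _, _, _, .cons t h p, q => .cons t h (p.append q)

/-- A walk `v_0, …, v_{n+1}` is a path if no node besides the final endpoint occurs more
than once, i.e. `v_0, …, v_n` are pairwise distinct. -/
def IsPath {a b : V} (p : G.Walk a b) : Prop := p.support.dropLast.Nodup

end DMG.Walk

/-- `A` is σ-separated from `B` given `C` in `G`: every walk from a node of `A` to a node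
of `B` is σ-blocked given `C`. -/
def DMG.sigmaSep (G : DMG V) (A B C : Set V) : Prop :=
  ∀ a ∈ A, ∀ b ∈ B, ∀ p : G.Walk a b, ¬ p.sigmaOpen C

/-- The lifted dependency graph of `G`, on two copies of `V`
(`Sum.inl` is the past copy `V_0`, `Sum.inr` the future copy `V_1`). -/
def DMG.lift (G : DMG V) : DMG (V ⊕ V) where
  Ed := {e | ∃ u v, (u, v) ∈ G.Ed ∧
        (e = (Sum.inl u, Sum.inl v) ∨ e = (Sum.inl u, Sum.inr v) ∨
         e = (Sum.inr u, Sum.inr v))}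
  Ebi := {e | ∃ u v, s(u, v) ∈ G.Ebi ∧
        (e = s(Sum.inl u, Sum.inl v) ∨ e = s(Sum.inl u, Sum.inr v) ∨
         e = s(Sum.inr u, Sum.inl v) ∨ e = s(Sum.inr u, Sum.inr v))}

/-- `B` is E-separated from `A` given `C` in `G`:
`A_0` is σ-separated from `B_1` given `C_0 ∪ (C_1 \ B_1)` in the lifted dependency graph. -/
def DMG.ESep (G : DMG V) (A B C : Set V) : Prop :=
  G.lift.sigmaSep (Sum.inl '' A) (Sum.inr '' B)
    ((Sum.inl '' C) ∪ ((Sum.inr '' C) \ (Sum.inr '' B)))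

/-- The independence model `I_E^G` of E-separation triples. -/
def DMG.IE (G : DMG V) : Set (Set V × Set V × Set V) :=
  {t | G.ESep t.1 t.2.1 t.2.2}


/-- The latent projection of `G` onto the observed nodes `O`: a directed edge when there is
a non-trivial directed walk whose interior nodes are all latent, and a bidirected edge when
there is a non-trivial collider-free walk with arrowheads at both endpoints whose interior
nodes are all latent. -/
def DMG.latentProj (G : DMG V) (O : Set V) : DMG O where
  Ed := {e | ∃ p : G.Walk e.1.val e.2.val,
          p.IsDirected ∧ 0 < p.length ∧ ∀ x ∈ p.interior, x ∉ O}
  Ebi := {e | ∃ u v : O, e = s(u, v) ∧ ∃ p : G.Walk u.val v.val,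
          p.headAtStart ∧ p.headAtEnd ∧ p.NoColliders ∧ 0 < p.length ∧
          ∀ x ∈ p.interior, x ∉ O}

/-- The last edge of the walk `p` before entering `scc_G(w)` has an arrowhead at its
endpoint in `scc_G(w)` (vacuous if the walk never leaves `scc_G(w)`). -/
def DMG.lastEdgeInto (G : DMG V) {a b : V} (w : V) (p : G.Walk a b) : Prop :=
  (∀ x ∈ p.support, x ∈ G.scc w) ∨
  ∃ (x y : V) (t : LinkType) (h : G.linkOK x y t) (p₁ : G.Walk a x) (p₂ : G.Walk y b),
    p = p₁.append (.cons t h p₂) ∧ x ∉ G.scc w ∧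
    (∀ z ∈ p₂.support, z ∈ G.scc w) ∧ t.headR

/-- An (asymmetric) inducing path from `v` to `w`: a non-trivial path such that every
collider on it is an ancestor of `v` or `w`, every interior non-collider is unblockable,
and the last edge before entering `scc_G(w)` points into `scc_G(w)`. -/
def DMG.IsInducingPath (G : DMG V) {v w : V} (p : G.Walk v w) : Prop :=
  0 < p.length ∧ p.IsPath ∧
  p.CollidersIn (G.anc {v, w}) ∧ p.NoncollidersUnblockable ∧ G.lastEdgeInto w p

/-! The greatest element adds an edge `a → b` whenever `a` has an edge into the strongly connected
component of `b`. This changes neither ancestors nor strongly connected components, and a new edge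
on a σ-open walk can be replaced by the old edge `a → y` followed by a directed path from `y` to `b`
inside the component, on which every node before `b` is unblockable. Passing to this graph commutes
with lifting, so E-separation is preserved.

Conversely, if `v` has no edge into the component of `w`, then the parents of that component
E-separate `w` from `v`: tracing an open walk in the lifted graph back from `w₁`, it stays among the
descendants of `w₁` until its first node, so to come from `v₀` it would have to start with an edge
from `v` into the component. An edge `v → w` in a Markov equivalent graph is itself a walk that
nothing blocks, hence it belongs to the enlarged graph. -/

namespace DMG

section Ancestors

variable {G : DMG V} {u v w : V}

theorem ancestor.refl (G : DMG V) (v : V) : G.ancestor v v := Relation.ReflTransGen.refl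

theorem ancestor.of_mem_Ed (h : (u, v) ∈ G.Ed) : G.ancestor u v := Relation.ReflTransGen.single h

theorem ancestor.trans (huv : G.ancestor u v) (hvw : G.ancestor v w) : G.ancestor u w :=
  Relation.ReflTransGen.trans huv hvw

theorem mem_scc_self (G : DMG V) (v : V) : v ∈ G.scc v := ⟨.refl G v, .refl G v⟩

theorem mem_scc_symm (h : u ∈ G.scc v) : v ∈ G.scc u := ⟨h.2, h.1⟩

theorem mem_scc_trans (huv : u ∈ G.scc v) (hvw : v ∈ G.scc w) : u ∈ G.scc w :=
  ⟨huv.1.trans hvw.1, hvw.2.trans huv.2⟩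

end Ancestors

section NodeOpen

variable {G : DMG V} {C : Set V} {u u' v w w' c : V} {t t₁ t₂ : LinkType}

/-- The condition that σ-openness given `C` imposes on an interior node `v` of a walk, entered from
`u` by a link of kind `t₁` and left to `w` by a link of kind `t₂`. -/
def NodeOpen (G : DMG V) (C : Set V) (u v w : V) (t₁ t₂ : LinkType) : Prop :=
  (colliderAt t₁ t₂ → v ∈ G.anc C) ∧
    (¬ colliderAt t₁ t₂ → ¬ unblockableAt G u v w t₁ t₂ → v ∉ C)

theorem NodeOpen.of_unblockableAt (hcol : ¬ colliderAt t₁ t₂)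
    (hunb : unblockableAt G u v w t₁ t₂) : G.NodeOpen C u v w t₁ t₂ :=
  ⟨fun hcol' => absurd hcol' hcol, fun _ hunb' => absurd hunb hunb'⟩

theorem NodeOpen.of_mem_scc (hopen : G.NodeOpen C u v w t₁ t₂)
    (hu : t₁.tailR → u' ∈ G.scc u) (hw : t₂.tailL → w' ∈ G.scc w) :
    G.NodeOpen C u' v w' t₁ t₂ :=
  ⟨hopen.1, fun hcol hunb => hopen.2 hcol fun hunb' =>
    hunb ⟨fun ht => mem_scc_trans (hu ht) (hunb'.1 ht),
      fun ht => mem_scc_trans (hw ht) (hunb'.2 ht)⟩⟩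

theorem Walk.sigmaOpenAux.of_mem_scc {p : G.Walk v c} (hp : p.sigmaOpenAux C u t)
    (hu : t.tailR → u' ∈ G.scc u) : p.sigmaOpenAux C u' t := by
  cases p with
  | nil => trivial
  | cons s h q => exact ⟨NodeOpen.of_mem_scc hp.1 hu fun _ => mem_scc_self G _, hp.2⟩

end NodeOpen

section Detour

variable {G : DMG V} {C : Set V} {a b c y v : V}

theorem exists_sigmaOpenAux_fwd_of_mem_scc (hy : y ∈ G.scc b) {p : G.Walk b c}
    (hp : p.sigmaOpenAux C a .fwd) : ∃ q : G.Walk y c, q.sigmaOpenAux C a .fwd := by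
  obtain ⟨hyb, hby⟩ := hy
  induction hyb using Relation.ReflTransGen.head_induction_on with
  | refl => exact ⟨p, hp⟩
  | @head x z hxz hzb ih =>
    obtain ⟨q, hq⟩ := ih (hby.trans (.of_mem_Ed hxz))
    have hz : z ∈ G.scc x := ⟨ancestor.trans hzb hby, .of_mem_Ed hxz⟩
    have hnode : G.NodeOpen C a x z .fwd .fwd :=
      .of_unblockableAt (fun hcol => hcol.2) ⟨nofun, fun _ => hz⟩
    exact ⟨.cons .fwd hxz q, hnode, hq.of_mem_scc nofun⟩

theorem exists_sigmaOpenAux_bwd_of_mem_scc (hy : y ∈ G.scc b) (hvy : (v, y) ∈ G.Ed)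
    {p : G.Walk v c} (hp : p.sigmaOpenAux C b .bwd) :
    ∃ v', (v', b) ∈ G.Ed ∧ ∃ q : G.Walk v' c, q.sigmaOpenAux C b .bwd := by
  obtain ⟨hyb, hby⟩ := hy
  induction hyb with
  | refl => exact ⟨v, hvy, p, hp⟩
  | @tail x z hyx hxz ih =>
    have hz : z ∈ G.scc x := ⟨ancestor.trans hby hyx, .of_mem_Ed hxz⟩
    obtain ⟨v', hv', q, hq⟩ :=
      ih (hp.of_mem_scc fun _ => mem_scc_symm hz) (ancestor.trans (.of_mem_Ed hxz) hby)
    have hnode : G.NodeOpen C z x v' .bwd .bwd :=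
      .of_unblockableAt (fun hcol => hcol.1) ⟨fun _ => hz, nofun⟩
    exact ⟨x, hxz, .cons .bwd hv' q, hnode, hq⟩

end Detour

/-- The graph with an edge `a → b` whenever `G` has an edge from `a` into `scc_G(b)`. For a directed
graph this is the greatest element of its Markov equivalence class. -/
def sccSaturation (G : DMG V) : DMG V where
  Ed := {e | ∃ y ∈ G.scc e.2, (e.1, y) ∈ G.Ed}
  Ebi := G.Ebi

section SccSaturation

variable {G : DMG V} {C : Set V} {a b c u v w : V} {t t₁ t₂ : LinkType}

theorem Ed_subset_sccSaturation_Ed (G : DMG V) : G.Ed ⊆ G.sccSaturation.Ed :=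
  fun e he => ⟨e.2, mem_scc_self G e.2, he⟩

theorem ancestor_sccSaturation (G : DMG V) : G.sccSaturation.ancestor = G.ancestor := by
  refine funext₂ fun a b => propext ⟨fun hab => ?_, fun hab => ?_⟩
  · induction hab with
    | refl => exact .refl G a
    | tail _ hedge ih =>
      obtain ⟨y, hy, hxy⟩ := hedge
      exact ih.trans ((ancestor.of_mem_Ed hxy).trans hy.1)
  · exact Relation.ReflTransGen.mono (fun _ _ h => G.Ed_subset_sccSaturation_Ed h) a b hab

theorem scc_sccSaturation (G : DMG V) : G.sccSaturation.scc = G.scc := by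
  simp only [funext_iff, scc, ancestor_sccSaturation, implies_true]

theorem nodeOpen_sccSaturation :
    G.sccSaturation.NodeOpen C u v w t₁ t₂ ↔ G.NodeOpen C u v w t₁ t₂ := by
  simp only [NodeOpen, unblockableAt, anc, scc_sccSaturation, ancestor_sccSaturation]

theorem linkOK.sccSaturation (h : G.linkOK u v t) : G.sccSaturation.linkOK u v t := by
  cases t with
  | fwd | bwd => exact G.Ed_subset_sccSaturation_Ed h
  | bi => exact h

theorem Walk.sigmaOpenAux.exists_sccSaturation {p : G.Walk b c} (hp : p.sigmaOpenAux C u t) :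
    ∃ q : G.sccSaturation.Walk b c, q.sigmaOpenAux C u t := by
  induction p generalizing u t with
  | nil v => exact ⟨.nil v, trivial⟩
  | cons s h p ih =>
    obtain ⟨q, hq⟩ := ih hp.2
    exact ⟨.cons s h.sccSaturation q, nodeOpen_sccSaturation.2 hp.1, hq⟩

/-- For `t = .bwd` the neighbour of `a` may change completely: the detour is prepended to the rest
of the walk. -/
theorem exists_linkOK_of_linkOK_sccSaturation (h : G.sccSaturation.linkOK a b t)
    {p : G.Walk b c} (hp : p.sigmaOpenAux C a t) :
    ∃ b', (t.tailL → b' ∈ G.scc b) ∧ G.linkOK a b' t ∧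
      ∃ q : G.Walk b' c, q.sigmaOpenAux C a t := by
  cases t with
  | fwd =>
    obtain ⟨y, hy, hay⟩ := h
    exact ⟨y, fun _ => hy, hay, exists_sigmaOpenAux_fwd_of_mem_scc hy hp⟩
  | bwd =>
    obtain ⟨y, hy, hby⟩ := h
    obtain ⟨b', hb', hq⟩ := exists_sigmaOpenAux_bwd_of_mem_scc hy hby hp
    exact ⟨b', nofun, hb', hq⟩
  | bi => exact ⟨b, nofun, h, p, hp⟩

theorem Walk.sigmaOpenAux.exists_of_sccSaturation {p : G.sccSaturation.Walk b c}
    (hp : p.sigmaOpenAux C u t) : ∃ q : G.Walk b c, q.sigmaOpenAux C u t := by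
  induction p generalizing u t with
  | nil v => exact ⟨.nil v, trivial⟩
  | cons s h p ih =>
    obtain ⟨q, hq⟩ := ih hp.2
    obtain ⟨b', hb', h', q', hq'⟩ := exists_linkOK_of_linkOK_sccSaturation h hq
    have hnode := nodeOpen_sccSaturation.1 hp.1
    exact ⟨.cons s h' q', hnode.of_mem_scc (fun _ => mem_scc_self G u) hb', hq'⟩

theorem exists_sigmaOpen_sccSaturation_iff :
    (∃ p : G.sccSaturation.Walk a b, p.sigmaOpen C) ↔ ∃ p : G.Walk a b, p.sigmaOpen C := by
  constructor
  · rintro ⟨_ | ⟨t, h, p⟩, hp⟩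
    · exact ⟨.nil a, trivial⟩
    · obtain ⟨q, hq⟩ := Walk.sigmaOpenAux.exists_of_sccSaturation hp
      obtain ⟨_, -, h', q', hq'⟩ := exists_linkOK_of_linkOK_sccSaturation h hq
      exact ⟨.cons t h' q', hq'⟩
  · rintro ⟨_ | ⟨t, h, p⟩, hp⟩
    · exact ⟨.nil a, trivial⟩
    · obtain ⟨q, hq⟩ := Walk.sigmaOpenAux.exists_sccSaturation hp
      exact ⟨.cons t h.sccSaturation q, hq⟩

theorem sigmaSep_sccSaturation (G : DMG V) (A B C : Set V) :
    G.sccSaturation.sigmaSep A B C ↔ G.sigmaSep A B C := by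
  simp only [sigmaSep, ← not_exists, exists_sigmaOpen_sccSaturation_iff]

end SccSaturation

section Lift

variable {G : DMG V} {u v : V} {x y : V ⊕ V}

theorem mem_lift_Ed_inl_inl : (Sum.inl u, Sum.inl v) ∈ G.lift.Ed ↔ (u, v) ∈ G.Ed := by
  simp [lift]

theorem mem_lift_Ed_inl_inr : (Sum.inl u, Sum.inr v) ∈ G.lift.Ed ↔ (u, v) ∈ G.Ed := by
  simp [lift]

theorem mem_lift_Ed_inr_inr : (Sum.inr u, Sum.inr v) ∈ G.lift.Ed ↔ (u, v) ∈ G.Ed := by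
  simp [lift]

theorem notMem_lift_Ed_inr_inl : (Sum.inr u, Sum.inl v) ∉ G.lift.Ed := by
  simp [lift]

theorem not_lift_linkOK_bi (hG : G.Ebi = ∅) : ¬ G.lift.linkOK x y .bi := by
  simp [linkOK, lift, hG]

theorem ancestor_of_lift_ancestor (h : G.lift.ancestor x y) :
    G.ancestor (x.elim id id) (y.elim id id) := by
  refine Relation.ReflTransGen.lift (Sum.elim id id) (fun x y hxy => ?_) x y h
  obtain ⟨u, v, huv, heq | heq | heq⟩ := hxy <;> cases heq <;> exact huv

theorem lift_ancestor_inl_inl : G.lift.ancestor (.inl u) (.inl v) ↔ G.ancestor u v :=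
  ⟨ancestor_of_lift_ancestor,
    Relation.ReflTransGen.lift Sum.inl (fun _ _ => mem_lift_Ed_inl_inl.2) u v⟩

theorem lift_ancestor_inr_inr : G.lift.ancestor (.inr u) (.inr v) ↔ G.ancestor u v :=
  ⟨ancestor_of_lift_ancestor,
    Relation.ReflTransGen.lift Sum.inr (fun _ _ => mem_lift_Ed_inr_inr.2) u v⟩

theorem not_lift_ancestor_inr_inl : ¬ G.lift.ancestor (.inr u) (.inl v) := by
  intro h
  have hright : ∀ z, G.lift.ancestor (.inr u) z → z.isRight := by
    intro z hz
    induction hz with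
    | refl => rfl
    | @tail x z _ hxz ih =>
      obtain ⟨x, rfl⟩ := Sum.isRight_iff.1 ih
      cases z with
      | inl z => exact absurd hxz notMem_lift_Ed_inr_inl
      | inr z => rfl
  exact absurd (hright _ h) (by simp)

theorem lift_scc_inl (G : DMG V) (v : V) : G.lift.scc (.inl v) = Sum.inl '' G.scc v := by
  ext (u | u) <;> simp [scc, lift_ancestor_inl_inl, not_lift_ancestor_inr_inl]

theorem lift_scc_inr (G : DMG V) (v : V) : G.lift.scc (.inr v) = Sum.inr '' G.scc v := by
  ext (u | u) <;> simp [scc, lift_ancestor_inr_inr, not_lift_ancestor_inr_inl]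

theorem lift_sccSaturation (G : DMG V) : G.sccSaturation.lift = G.lift.sccSaturation := by
  have hEd : G.sccSaturation.lift.Ed = G.lift.sccSaturation.Ed := by
    ext ⟨u | u, v | v⟩ <;>
      simp [sccSaturation, lift_scc_inl, lift_scc_inr, mem_lift_Ed_inl_inl, mem_lift_Ed_inl_inr,
        mem_lift_Ed_inr_inr, notMem_lift_Ed_inr_inl]
  exact congrArg (DMG.mk · G.lift.Ebi) hEd

theorem IE_sccSaturation (G : DMG V) : G.sccSaturation.IE = G.IE := by
  simp only [IE, ESep, lift_sccSaturation, sigmaSep_sccSaturation]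

end Lift

section Separation

variable {G : DMG V} {v w x : V} {b : V ⊕ V} {t : LinkType}

/-- The set `C₀ ∪ (C₁ \ B₁)` that E-separation of `B` given `C` conditions on. -/
def liftCond (B C : Set V) : Set (V ⊕ V) :=
  (Sum.inl '' C) ∪ ((Sum.inr '' C) \ (Sum.inr '' B))

theorem ESep_iff_sigmaSep_liftCond (G : DMG V) (A B C : Set V) :
    G.ESep A B C ↔ G.lift.sigmaSep (Sum.inl '' A) (Sum.inr '' B) (liftCond B C) :=
  Iff.rfl

theorem inl_mem_liftCond {B C : Set V} : Sum.inl x ∈ liftCond B C ↔ x ∈ C := by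
  simp [liftCond]

theorem inr_mem_liftCond {B C : Set V} : Sum.inr x ∈ liftCond B C ↔ x ∈ C ∧ x ∉ B := by
  simp [liftCond]

theorem ancestor_of_mem_pa_scc (h : x ∈ G.pa (G.scc w)) : G.ancestor x w := by
  obtain ⟨y, hy, hxy⟩ := h
  exact (ancestor.of_mem_Ed hxy).trans hy.1

theorem ancestor_of_inr_mem_anc_liftCond {B : Set V}
    (h : Sum.inr x ∈ G.lift.anc (liftCond B (G.pa (G.scc w)))) : G.ancestor x w := by
  obtain ⟨z | z, hz, hxz⟩ := h
  · exact absurd hxz not_lift_ancestor_inr_inl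
  · exact (lift_ancestor_inr_inr.1 hxz).trans (ancestor_of_mem_pa_scc (inr_mem_liftCond.1 hz).1)

/-- A parent of the component, in either copy, lies in the conditioning set unless it is `w₁`, and
it is blockable unless it lies in the component. -/
theorem exists_mem_scc_eq_inr_of_nodeOpen_fwd {a : V ⊕ V} (hx : x ∈ G.scc w)
    (hedge : (b, Sum.inr x) ∈ G.lift.Ed)
    (hopen : G.lift.NodeOpen (liftCond {w} (G.pa (G.scc w))) a b (.inr x) t .fwd) :
    ∃ z ∈ G.scc w, b = .inr z := by
  have hb : Sum.inr x ∈ G.lift.scc b ∨ b ∉ liftCond {w} (G.pa (G.scc w)) := by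
    by_contra! hb
    exact hopen.2 (fun hcol => hcol.2) (fun hunb => hb.1 (hunb.2 rfl)) hb.2
  cases b with
  | inl z =>
    have hz : z ∈ G.pa (G.scc w) := ⟨x, hx, mem_lift_Ed_inl_inr.1 hedge⟩
    rcases hb with hscc | hz'
    · exact absurd hscc.1 not_lift_ancestor_inr_inl
    · exact absurd (inl_mem_liftCond.2 hz) hz'
  | inr z =>
    have hz : z ∈ G.pa (G.scc w) := ⟨x, hx, mem_lift_Ed_inr_inr.1 hedge⟩
    refine ⟨z, ?_, rfl⟩
    rcases hb with hscc | hz'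
    · have hxz : x ∈ G.scc z := ⟨lift_ancestor_inr_inr.1 hscc.1, lift_ancestor_inr_inr.1 hscc.2⟩
      exact mem_scc_trans (mem_scc_symm hxz) hx
    · have hzw : z = w := by simpa [inr_mem_liftCond, hz] using hz'
      exact hzw ▸ mem_scc_self G w

theorem Walk.sigmaOpenAux.exists_eq_inr_of_pa_scc (hG : G.Ebi = ∅) {a : V ⊕ V}
    {p : G.lift.Walk b (.inr w)}
    (hp : p.sigmaOpenAux (liftCond {w} (G.pa (G.scc w))) a t) :
    ∃ x, b = .inr x ∧ G.ancestor w x ∧ (t.headR → G.ancestor x w) := by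
  generalize hc : Sum.inr w = c at p
  induction p generalizing a t with
  | nil => exact ⟨w, hc.symm, .refl G w, fun _ => .refl G w⟩
  | @cons b _ c s h p ih =>
    obtain ⟨hnode, hp⟩ := hp
    obtain ⟨y, rfl, hwy, hyw⟩ := ih hc hp
    cases s with
    | bi => exact absurd h (not_lift_linkOK_bi hG)
    | fwd =>
      obtain ⟨z, hz, rfl⟩ := exists_mem_scc_eq_inr_of_nodeOpen_fwd ⟨hyw trivial, hwy⟩ h hnode
      exact ⟨z, rfl, hz.2, fun _ => hz.1⟩
    | bwd =>
      cases b with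
      | inl z => exact absurd h notMem_lift_Ed_inr_inl
      | inr z =>
        refine ⟨z, rfl, hwy.trans (.of_mem_Ed (mem_lift_Ed_inr_inr.1 h)), fun ht => ?_⟩
        exact ancestor_of_inr_mem_anc_liftCond (hnode.1 ⟨ht, trivial⟩)

theorem ESep_singleton_pa_scc (hG : G.Ebi = ∅) (h : v ∉ G.pa (G.scc w)) :
    G.ESep {v} {w} (G.pa (G.scc w)) := by
  rw [ESep_iff_sigmaSep_liftCond]
  rintro _ ⟨_, rfl, rfl⟩ _ ⟨_, rfl, rfl⟩ p hp
  cases p with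
  | cons t hlink p =>
    obtain ⟨x, rfl, hwx, hxw⟩ := Walk.sigmaOpenAux.exists_eq_inr_of_pa_scc hG hp
    cases t with
    | bi => exact not_lift_linkOK_bi hG hlink
    | bwd => exact notMem_lift_Ed_inr_inl hlink
    | fwd => exact h ⟨x, ⟨hxw trivial, hwx⟩, mem_lift_Ed_inl_inr.1 hlink⟩

theorem not_ESep_singleton_of_mem_Ed (h : (v, w) ∈ G.Ed) (C : Set V) :
    ¬ G.ESep {v} {w} C := fun hsep =>
  hsep (.inl v) ⟨v, rfl, rfl⟩ (.inr w) ⟨w, rfl, rfl⟩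
    (.cons .fwd (mem_lift_Ed_inl_inr.2 h) (.nil _)) trivial

theorem Ed_subset_sccSaturation_Ed_of_IE_subset {G' : DMG V} (hG : G.Ebi = ∅)
    (hIE : G.IE ⊆ G'.IE) : G'.Ed ⊆ G.sccSaturation.Ed := by
  rintro ⟨v, w⟩ hvw
  by_contra hv
  have hsep : ({v}, {w}, G.pa (G.scc w)) ∈ G.IE := ESep_singleton_pa_scc hG hv
  exact not_ESep_singleton_of_mem_Ed hvw _ (hIE hsep)

end Separation

end DMG

theorem greatest_markov_equivalent_DG_general {V : Type} (G : DMG V) (hG : G.Ebi = ∅) :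
    ∃ Ghat : DMG V, Ghat.Ebi = ∅ ∧ Ghat.IE = G.IE ∧
      ∀ G' : DMG V, G.IE ⊆ G'.IE → G'.Ed ⊆ Ghat.Ed :=
  ⟨G.sccSaturation, hG, G.IE_sccSaturation,
    fun _ => DMG.Ed_subset_sccSaturation_Ed_of_IE_subset hG⟩

/-- Every E-separation Markov equivalence class of directed graphs contains a greatest
element with respect to edge-set inclusion. -/
theorem greatest_markov_equivalent_DG {V : Type} [Fintype V] (G : DMG V)
    (hG : G.Ebi = ∅) :
    ∃ Ghat : DMG V, Ghat.Ebi = ∅ ∧ Ghat.IE = G.IE ∧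
      ∀ G' : DMG V, G'.Ebi = ∅ → G'.IE = G.IE → G'.Ed ⊆ Ghat.Ed := by
  obtain ⟨Ghat, hbi, hIE, hmax⟩ := greatest_markov_equivalent_DG_general G hG
  exact ⟨Ghat, hbi, hIE, fun G' _ h => hmax G' h.ge⟩

end ESepPaper
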